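/- arXiv:2002.04346 — 2 statements merged into one kernel-verified Lean document; each statement's English description precedes it below -/
import Mathlib

section
/- Let b(z) be an n×n real polynomial matrix with det b(z) ≠ 0 for all complex z with |z| = 1, and suppose b(z) = p(z) s(z) f(z) and b(z) = p̃(z) s̃(z) f̃(z) are two Wiener–Hopf factorisations of b, with partial indices κ₁ ≥ ⋯ ≥ κₙ and κ̃₁ ≥ ⋯ ≥ κ̃ₙ respectively. Then κᵢ = κ̃ᵢ for all i = 1,…,n; in particular s(z) = s̃(z), i.e. the partial indices of a Wiener–Hopf factorisation are uniquely determined by b. -/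
open Polynomial Matrix

/-- Evaluation of a real polynomial matrix at a complex point (entrywise). -/
noncomputable def evalMat {n : ℕ} (M : Matrix (Fin n) (Fin n) (Polynomial ℝ)) (z : ℂ) :
    Matrix (Fin n) (Fin n) ℂ :=
  M.map (fun r => Polynomial.aeval z r)

/-- A polynomial matrix viewed as a matrix over the field of real rational functions. -/
noncomputable def polyToRat {n : ℕ} (M : Matrix (Fin n) (Fin n) (Polynomial ℝ)) :
    Matrix (Fin n) (Fin n) (RatFunc ℝ) :=
  M.map (algebraMap (Polynomial ℝ) (RatFunc ℝ))

/-- The rational matrix F(1/z) obtained from a polynomial matrix F by substituting 1/z. -/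
noncomputable def invSub {n : ℕ} (F : Matrix (Fin n) (Fin n) (Polynomial ℝ)) :
    Matrix (Fin n) (Fin n) (RatFunc ℝ) :=
  F.map (fun r => Polynomial.aeval ((RatFunc.X : RatFunc ℝ)⁻¹) r)

/-- The diagonal matrix diag(z^{κ₁},…,z^{κₙ}) over ℝ(z). -/
noncomputable def sMat (n : ℕ) (κ : Fin n → ℤ) : Matrix (Fin n) (Fin n) (RatFunc ℝ) :=
  Matrix.diagonal (fun i => (RatFunc.X : RatFunc ℝ) ^ (κ i))

/-- `IsWHF b p F κ` : b(z) = p(z) · diag(z^{κᵢ}) · F(1/z) is a Wiener–Hopf factorisation. -/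
structure IsWHF {n : ℕ} (b p F : Matrix (Fin n) (Fin n) (Polynomial ℝ))
    (κ : Fin n → ℤ) : Prop where
  p_noZero : ∀ z : ℂ, ‖z‖ ≤ 1 → (evalMat p z).det ≠ 0
  F_noZero : ∀ w : ℂ, ‖w‖ ≤ 1 → (evalMat F w).det ≠ 0
  anti : ∀ i j : Fin n, i ≤ j → κ j ≤ κ i
  eq : polyToRat b = polyToRat p * sMat n κ * invSub F

/-- Partial indices of type (κ,k): the first k indices equal κ+1, the rest κ. -/
def idx (n : ℕ) (κ k : ℕ) : Fin n → ℤ := fun i => if (i : ℕ) < k then (κ : ℤ) + 1 else (κ : ℤ)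


lemma det_evalMat {n : ℕ} (M : Matrix (Fin n) (Fin n) (Polynomial ℝ)) (z : ℂ) :
    (evalMat M z).det = aeval z M.det := by
  rw [AlgHom.map_det]; rfl

lemma whf_scalar (a d g h : ℝ[X]) (k l : ℤ) (hkl : l < k)
    (hd : ∀ z : ℂ, ‖z‖ ≤ 1 → aeval z d ≠ 0) (hh : ∀ z : ℂ, ‖z‖ ≤ 1 → aeval z h ≠ 0)
    (H : algebraMap ℝ[X] (RatFunc ℝ) a * RatFunc.X ^ k * aeval (RatFunc.X : RatFunc ℝ)⁻¹ h
      = algebraMap ℝ[X] (RatFunc ℝ) d * RatFunc.X ^ l * aeval (RatFunc.X : RatFunc ℝ)⁻¹ g) :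
    a = 0 := by
  obtain ⟨m, hm⟩ : ∃ m : ℕ, k = l + (m + 1 : ℕ) := ⟨(k - l - 1).toNat, by omega⟩
  have hX : (RatFunc.X : RatFunc ℝ) ≠ 0 := RatFunc.X_ne_zero
  set N := max g.natDegree h.natDegree with hN
  have key : ∀ f : ℝ[X], f.natDegree ≤ N → aeval (RatFunc.X : RatFunc ℝ)⁻¹ f * RatFunc.X ^ N
      = algebraMap ℝ[X] (RatFunc ℝ) (reflect N f) := by
    intro f hf
    let _ : Invertible (RatFunc.X : RatFunc ℝ)⁻¹ := ⟨RatFunc.X, by field_simp, by field_simp⟩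
    have := eval₂_reflect_mul_pow (algebraMap ℝ (RatFunc ℝ)) (RatFunc.X : RatFunc ℝ)⁻¹ N f hf
    rw [aeval_def, ← this, mul_assoc, ← mul_pow, inv_mul_cancel₀ hX, one_pow, mul_one]
    change aeval (RatFunc.X : RatFunc ℝ) (reflect N f) = _
    rw [← RatFunc.algebraMap_X, aeval_algebraMap_apply, aeval_X_left_apply]
  have E : a * X ^ (m + 1) * reflect N h = d * reflect N g := by
    apply RatFunc.algebraMap_injective ℝ
    simp only [map_mul, map_pow, RatFunc.algebraMap_X]
    rw [← key h (le_max_right _ _), ← key g (le_max_left _ _)]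
    rw [hm, zpow_add₀ hX, zpow_natCast] at H
    have hl : (RatFunc.X : RatFunc ℝ) ^ l ≠ 0 := zpow_ne_zero _ hX
    apply mul_left_cancel₀ hl
    linear_combination RatFunc.X ^ N * H
  have h0 : h.coeff 0 ≠ 0 := by
    have := hh 0 (by simp)
    intro h0
    apply this
    rw [← coeff_zero_eq_aeval_zero', h0, map_zero]
  have hcN : (reflect N h).coeff N ≠ 0 := by
    rw [coeff_reflect]; simpa [revAt_le] using h0
  have hdeg : ∀ f : ℝ[X], f.natDegree ≤ N → (reflect N f).natDegree ≤ N := by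
    intro f hf
    rw [natDegree_le_iff_coeff_eq_zero]
    intro i hi
    rw [coeff_reflect, revAt_eq_self_of_lt hi]
    exact coeff_eq_zero_of_natDegree_lt (by omega)
  have hcop : IsCoprime d (X ^ (m + 1) * reflect N h) := by
    rw [isCoprime_iff_aeval_ne_zero_of_isAlgClosed ℝ ℂ]
    intro z
    by_cases hz : ‖z‖ ≤ 1
    · exact Or.inl (hd z hz)
    · right
      have hz0 : z ≠ 0 := by rintro rfl; simp at hz
      rw [map_mul, map_pow, aeval_X]
      refine mul_ne_zero (pow_ne_zero _ hz0) ?_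
      let _ : Invertible z⁻¹ := ⟨z, by field_simp, by field_simp⟩
      have := eval₂_reflect_mul_pow (algebraMap ℝ ℂ) z⁻¹ N h (le_max_right _ _)
      intro h'
      refine hh z⁻¹ ?_ ?_
      · rw [norm_inv]; exact inv_le_one_of_one_le₀ (by linarith)
      · rw [aeval_def, ← this]
        change aeval z (reflect N h) * _ = 0
        rw [h', zero_mul]
  have hdvd : d ∣ a := by
    refine hcop.dvd_of_dvd_mul_right ?_
    rw [← mul_assoc, E]; exact dvd_mul_right _ _
  obtain ⟨q, rfl⟩ := hdvd
  have hd0 : d ≠ 0 := by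
    rintro rfl; exact hd 0 (by simp) (by simp)
  have E2 : q * X ^ (m + 1) * reflect N h = reflect N g := by
    apply mul_left_cancel₀ hd0
    rw [← E]; ring
  by_contra hq
  have hq0 : q ≠ 0 := right_ne_zero_of_mul hq
  have hr0 : reflect N h ≠ 0 := by
    intro h'; rw [h'] at hcN; simp at hcN
  have d1 := congrArg natDegree E2
  rw [natDegree_mul (mul_ne_zero hq0 (pow_ne_zero _ X_ne_zero)) hr0,
    natDegree_mul hq0 (pow_ne_zero _ X_ne_zero), natDegree_X_pow] at d1
  have d2 := hdeg g (le_max_left _ _)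
  have d3 := le_natDegree_of_ne_zero hcN
  omega

lemma det_zero_block {n : ℕ} {R : Type*} [CommRing R] (M : Matrix (Fin n) (Fin n) R) (i : Fin n)
    (h : ∀ r c, i ≤ r → c ≤ i → M r c = 0) : M.det = 0 := by
  rw [det_apply]
  refine Finset.sum_eq_zero fun σ _ => ?_
  have : ∃ c, c ≤ i ∧ i ≤ σ c := by
    by_contra! hc
    have := Finset.card_le_card_of_injOn (s := Finset.Iic i) (t := Finset.Iio i) σ
      (fun c hc' => by
        have := hc c (by simpa using hc')
        simpa using this) σ.injective.injOn
    simp at this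
  obtain ⟨c, h1, h2⟩ := this
  have h0 : ∏ j, M (σ j) j = 0 :=
    Finset.prod_eq_zero (f := fun j => M (σ j) j) (Finset.mem_univ c) (h _ _ h2 h1)
  rw [h0, smul_zero]

lemma whf_le {n : ℕ} (b p p' F F' : Matrix (Fin n) (Fin n) (Polynomial ℝ))
    (κ κ' : Fin n → ℤ)
    (h1 : IsWHF b p F κ) (h2 : IsWHF b p' F' κ') (i : Fin n) : κ i ≤ κ' i := by
  by_contra! hi
  have hp : p.det ≠ 0 := by
    have := h1.p_noZero 0 (by simp)
    rw [det_evalMat] at this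
    intro h; rw [h] at this; simp at this
  have hp' : p'.det ≠ 0 := by
    have := h2.p_noZero 0 (by simp)
    rw [det_evalMat] at this
    intro h; rw [h] at this; simp at this
  have hdet : (adjugate p' * p).det ≠ 0 := by
    rw [det_mul, det_adjugate]
    exact mul_ne_zero (pow_ne_zero _ hp') hp
  apply hdet
  apply det_zero_block _ i
  intro r c hr hc
  have hlt : κ' r < κ c := (h2.anti _ _ hr).trans_lt (hi.trans_le (h1.anti _ _ hc))
  refine whf_scalar _ p'.det ((F' * adjugate F) r c) F.det (κ c) (κ' r) hlt ?_ ?_ ?_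
  · intro z hz; rw [← det_evalMat]; exact h2.p_noZero z hz
  · intro z hz; rw [← det_evalMat]; exact h1.F_noZero z hz
  have pm : ∀ A B : Matrix (Fin n) (Fin n) ℝ[X], polyToRat (A * B) = polyToRat A * polyToRat B :=
    fun A B => Matrix.map_mul
  have im : ∀ A B : Matrix (Fin n) (Fin n) ℝ[X], invSub (A * B) = invSub A * invSub B :=
    fun A B => Matrix.map_mul (f := (aeval (RatFunc.X : RatFunc ℝ)⁻¹).toRingHom)
  have e1 : polyToRat (adjugate p' * p) * sMat n κ * invSub (F * adjugate F)
      = polyToRat (adjugate p' * p') * sMat n κ' * invSub (F' * adjugate F) := by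
    have := h1.eq.symm.trans h2.eq
    have := congrArg (fun Z => polyToRat (adjugate p') * Z * invSub (adjugate F)) this
    simpa only [pm, im, Matrix.mul_assoc] using this
  have e2 : invSub (F * adjugate F) =
      diagonal fun _ => aeval (RatFunc.X : RatFunc ℝ)⁻¹ F.det := by
    rw [mul_adjugate]
    ext a b
    by_cases hab : a = b <;> simp [invSub, hab, Matrix.one_apply, diagonal_apply]
  have e3 : polyToRat (adjugate p' * p') =
      diagonal fun _ => algebraMap ℝ[X] (RatFunc ℝ) p'.det := by
    rw [adjugate_mul]
    ext a b
    by_cases hab : a = b <;> simp [polyToRat, hab, Matrix.one_apply, diagonal_apply]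
  rw [e2, e3, sMat, sMat, diagonal_mul_diagonal] at e1
  have := congrFun (congrFun e1 r) c
  rw [mul_diagonal, mul_diagonal, diagonal_mul] at this
  exact this

/-- the partial indices of a Wiener–Hopf factorisation are uniquely
determined by b. -/
theorem stmt13 {n : ℕ} (b p p' F F' : Matrix (Fin n) (Fin n) (Polynomial ℝ))
    (κ κ' : Fin n → ℤ)
    (hcirc : ∀ z : ℂ, ‖z‖ = 1 → (evalMat b z).det ≠ 0)
    (h1 : IsWHF b p F κ) (h2 : IsWHF b p' F' κ') :
    κ = κ' := by
  funext i
  exact le_antisymm (whf_le b p p' F F' κ κ' h1 h2 i) (whf_le b p' p F' F κ' κ h2 h1 i)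
end

section
/- Let a(z) = I_n − a₁z − ⋯ − a_p z^p and b(z) = b₀ + b₁z + ⋯ + b_q z^q be n×n real polynomial matrices and let u₁ ∈ ℝ^{n×n}, u₁ ≠ 0, satisfy u₁ a_p = 0 and u₁ b_q = 0. Set ũ(z) = I_n + u₁ z, ã(z) = ũ(z) a(z), and b̃(z) = ũ(z) b(z). Then every entry of ã has degree at most p with ã(0) = I_n, every entry of b̃ has degree at most q, (ã, b̃) ≠ (a, b) whenever u₁(a(z),b(z)) is not identically zero, and ã(z)^{−1} b̃(z) = a(z)^{−1} b(z) as matrices over the field of real rational functions (both inverses exist in ℝ(z)^{n×n} since det a(0) = det ã(0) = 1). -/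
open Polynomial Matrix

/-- premultiplication by ũ(z) = I + u₁z with u₁aₚ = 0, u₁b_q = 0 yields
another VARMA(p,q) realisation of the same transfer function. -/
theorem stmt15 {n p q : ℕ}
    (a b : Matrix (Fin n) (Fin n) (Polynomial ℝ)) (u₁ : Matrix (Fin n) (Fin n) ℝ)
    (hadeg : ∀ i j, (a i j).degree ≤ (p : WithBot ℕ))
    (ha0 : a.map (fun r => r.coeff 0) = (1 : Matrix (Fin n) (Fin n) ℝ))
    (hbdeg : ∀ i j, (b i j).degree ≤ (q : WithBot ℕ))
    (hu1 : u₁ ≠ 0)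
    (huap : u₁ * a.map (fun r => r.coeff p) = 0)
    (hubq : u₁ * b.map (fun r => r.coeff q) = 0) :
    letI u : Matrix (Fin n) (Fin n) (Polynomial ℝ) :=
      (1 : Matrix (Fin n) (Fin n) (Polynomial ℝ)) +
        u₁.map (fun r => Polynomial.C r * Polynomial.X)
    letI ta : Matrix (Fin n) (Fin n) (Polynomial ℝ) := u * a
    letI tb : Matrix (Fin n) (Fin n) (Polynomial ℝ) := u * b
    (∀ i j, (ta i j).degree ≤ (p : WithBot ℕ)) ∧
    ta.map (fun r => r.coeff 0) = (1 : Matrix (Fin n) (Fin n) ℝ) ∧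
    (∀ i j, (tb i j).degree ≤ (q : WithBot ℕ)) ∧
    ((u₁.map Polynomial.C * a ≠ 0 ∨ u₁.map Polynomial.C * b ≠ 0) →
      ¬(ta = a ∧ tb = b)) ∧
    (polyToRat ta)⁻¹ * polyToRat tb = (polyToRat a)⁻¹ * polyToRat b := by
  set u : Matrix (Fin n) (Fin n) (Polynomial ℝ) :=
    (1 : Matrix (Fin n) (Fin n) (Polynomial ℝ)) +
      u₁.map (fun r => Polynomial.C r * Polynomial.X) with hu
  have hcoeff : ∀ (c : Matrix (Fin n) (Fin n) (Polynomial ℝ)) i j m,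
      ((u * c) i j).coeff (m + 1) =
        (c i j).coeff (m + 1) + (u₁ * c.map (fun r => r.coeff m)) i j := by
    intro c i j m
    rw [hu, Matrix.add_mul, Matrix.one_mul]
    simp only [Matrix.add_apply, Polynomial.coeff_add, Matrix.mul_apply,
      Matrix.map_apply, Polynomial.finsetSum_coeff]
    congr 1
    refine Finset.sum_congr rfl fun k _ => ?_
    rw [mul_assoc, Polynomial.coeff_C_mul, Polynomial.coeff_X_mul]
  have hdeg : ∀ (c : Matrix (Fin n) (Fin n) (Polynomial ℝ)) (d : ℕ),
      (∀ i j, (c i j).degree ≤ (d : WithBot ℕ)) →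
      u₁ * c.map (fun r => r.coeff d) = 0 →
      ∀ i j, ((u * c) i j).degree ≤ (d : WithBot ℕ) := by
    intro c d hc h0 i j
    rw [Polynomial.degree_le_iff_coeff_zero]
    intro m hm
    have hm' : d < m := by exact_mod_cast hm
    obtain ⟨k, rfl⟩ : ∃ k, m = k + 1 := ⟨m - 1, by omega⟩
    have hz : ∀ l, d < l → ∀ i j, (c i j).coeff l = 0 := fun l hl i j =>
      Polynomial.coeff_eq_zero_of_degree_lt ((hc i j).trans_lt (by exact_mod_cast hl))
    rw [hcoeff, hz _ hm', zero_add]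
    rcases (Nat.lt_succ_iff.mp hm').eq_or_lt with h | h
    · subst h
      rw [h0]; rfl
    · simp [Matrix.mul_apply, hz k h]
  have hc0 : ∀ c : Matrix (Fin n) (Fin n) (Polynomial ℝ),
      (u * c).map (fun r => r.coeff 0) = c.map (fun r => r.coeff 0) := by
    intro c
    ext i j
    simp [u, add_mul, Matrix.mul_apply, Polynomial.mul_coeff_zero]
  have hne : ∀ c : Matrix (Fin n) (Fin n) (Polynomial ℝ), u * c = c →
      u₁.map Polynomial.C * c = 0 := by
    intro c h
    ext i j m
    have h1 := hcoeff c i j m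
    rw [h] at h1
    have h2 : (u₁ * c.map (fun r => r.coeff m)) i j = 0 := by linarith
    simpa [Matrix.mul_apply, Polynomial.finsetSum_coeff] using h2
  have hmul : ∀ c : Matrix (Fin n) (Fin n) (Polynomial ℝ),
      polyToRat (u * c) = polyToRat u * polyToRat c := fun c => Matrix.map_mul
  have hdet : u.det ≠ 0 := by
    intro h
    have h1 : (u.map (Polynomial.constantCoeff : Polynomial ℝ →+* ℝ)) = 1 := by
      ext i j
      by_cases hij : i = j <;> simp [u, hij, Matrix.one_apply]
    have h2 := RingHom.map_det (Polynomial.constantCoeff : Polynomial ℝ →+* ℝ) u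
    rw [RingHom.mapMatrix_apply, h1, h] at h2
    simp at h2
  have hunit : IsUnit (polyToRat u).det := by
    have h2 := RingHom.map_det (algebraMap (Polynomial ℝ) (RatFunc ℝ)) u
    rw [RingHom.mapMatrix_apply] at h2
    rw [isUnit_iff_ne_zero, polyToRat, ← h2]
    exact fun h => hdet ((map_eq_zero_iff _ (RatFunc.algebraMap_injective ℝ)).mp h)
  refine ⟨hdeg a p hadeg huap, (hc0 a).trans ha0, hdeg b q hbdeg hubq, ?_, ?_⟩
  · rintro (h | h) ⟨h1, h2⟩
    · exact h (hne a h1)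
    · exact h (hne b h2)
  · rw [hmul, hmul, Matrix.mul_inv_rev, Matrix.mul_assoc, Matrix.nonsing_inv_mul_cancel_left _ _ hunit]
end
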